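/- Suppose Q is a transition kernel on ℤ^d with invariant measure π satisfying c ≤ π(x) ≤ C for all x (0 < c ≤ C < ∞), Q is strongly irreducible with constants (ε,N), and Q has range bounded by B. Then there exists an integer m ≥ 1, depending only on d, c, C, ε, N and B, such that the transition kernel (Q^m)*(Q^m) satisfies Assumption A.1 with some constants (K,δ). -/

import Mathlib

open scoped Classical

noncomputable section

/-- Points of `ℤ^d`. -/
abbrev Zd (d : ℕ) := Fin d → ℤ

/-- Euclidean norm on `ℤ^d`. -/
def eucNorm {d : ℕ} (v : Zd d) : ℝ := Real.sqrt (∑ i, ((v i : ℝ)) ^ 2)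

/-- `n`-fold composition of a transition kernel. -/
def kerpow {d : ℕ} (Q : Zd d → Zd d → ℝ) : ℕ → Zd d → Zd d → ℝ
  | 0 => fun x y => if x = y then 1 else 0
  | m + 1 => fun x y => ∑' zz : Zd d, kerpow Q m x zz * Q zz y

/-- Adjoint of a kernel with respect to the measure `π`. -/
def adjK {d : ℕ} (π : Zd d → ℝ) (Q : Zd d → Zd d → ℝ) (x y : Zd d) : ℝ :=
  π y * Q y x / π x

/-- Composition of two kernels. -/
def compK {d : ℕ} (Q₁ Q₂ : Zd d → Zd d → ℝ) (x y : Zd d) : ℝ :=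
  ∑' zz : Zd d, Q₁ x zz * Q₂ zz y

/-- Dirichlet form of the kernel `Q` with respect to `π`. -/
def dirichlet {d : ℕ} (π : Zd d → ℝ) (Q : Zd d → Zd d → ℝ) (f : Zd d → ℝ) : ℝ :=
  (1 / 2) * ∑' p : Zd d × Zd d, (f p.2 - f p.1) ^ 2 * π p.1 * Q p.1 p.2

/-- `L²(π)`-norm. -/
def l2norm {d : ℕ} (π : Zd d → ℝ) (f : Zd d → ℝ) : ℝ := Real.sqrt (∑' x, (f x) ^ 2 * π x)

/-- `L¹(π)`-norm. -/
def l1norm {d : ℕ} (π : Zd d → ℝ) (f : Zd d → ℝ) : ℝ := ∑' x, |f x| * π x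

/-- Maximum norm on `ℤ^d`, as a natural number. -/
def maxNorm {d : ℕ} (v : Zd d) : ℕ := Finset.univ.sup fun i => (v i).natAbs

/-- Assumption A.1 with constants `(K, δ)`. -/
def AssumptionA1 {d : ℕ} (Q : Zd d → Zd d → ℝ) (K : ℕ) (δ : ℝ) : Prop :=
  ∀ x y : Zd d, maxNorm (y - x) ≤ 3 * K + 1 →
    ∃ y' : Zd d, maxNorm (y' - y) ≤ K ∧ δ ≤ Q x y'

/-!
Strong irreducibility gives every point `x` a loop of bounded length whose probability is bounded
below. Going round the loop and stopping part-way shows that, at *every* time `t`, the walk started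
at `x` is near `x` with probability bounded below; cutting off an initial piece of the loop instead
shows that `x` is entered, after exactly `t` steps, from some point near `x`. To go from `x` to the
vicinity of `y` under `(Q^m)* Q^m`, pick `z` near `x` with `Q^m(z, x)` bounded below, then follow a
nearest-neighbour path from `z` to `y` in at most `m` steps and wait near `y` for the remaining
time. Waiting near `y` costs a distance that does not depend on `m`, so `K` can be fixed before `m`.
-/

section Norms

variable {d : ℕ}

lemma maxNorm_le_iff {v : Zd d} {n : ℕ} : maxNorm v ≤ n ↔ ∀ i, (v i).natAbs ≤ n := by
  simp [maxNorm]

@[simp] lemma maxNorm_zero : maxNorm (0 : Zd d) = 0 := by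
  simp [maxNorm]

lemma maxNorm_sub_comm (x y : Zd d) : maxNorm (x - y) = maxNorm (y - x) := by
  simp only [maxNorm, ← Int.natAbs_neg (x _ - y _), Pi.sub_apply, neg_sub]

lemma maxNorm_sub_le (x y z : Zd d) : maxNorm (z - x) ≤ maxNorm (y - x) + maxNorm (z - y) := by
  refine maxNorm_le_iff.mpr fun i => ?_
  have hxy := maxNorm_le_iff.mp (le_refl (maxNorm (y - x))) i
  have hyz := maxNorm_le_iff.mp (le_refl (maxNorm (z - y))) i
  simp only [Pi.sub_apply] at *
  omega

lemma sum_natAbs_le_of_maxNorm_le {v : Zd d} {n : ℕ} (h : maxNorm v ≤ n) :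
    ∑ i, (v i).natAbs ≤ d * n := by
  simpa using Finset.sum_le_card_nsmul Finset.univ _ n fun i _ => maxNorm_le_iff.mp h i

lemma abs_le_eucNorm (v : Zd d) (i : Fin d) : |(v i : ℝ)| ≤ eucNorm v :=
  Real.abs_le_sqrt <| Finset.single_le_sum (f := fun i => (v i : ℝ) ^ 2)
    (fun _ _ => sq_nonneg _) (Finset.mem_univ i)

lemma maxNorm_le_eucNorm (v : Zd d) : (maxNorm v : ℝ) ≤ eucNorm v := by
  refine (Nat.le_floor_iff (Real.sqrt_nonneg _)).mp <| maxNorm_le_iff.mpr fun i => Nat.le_floor ?_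
  rw [Nat.cast_natAbs, Int.cast_abs]
  exact abs_le_eucNorm v i

lemma eucNorm_single (i : Fin d) (a : ℤ) : eucNorm (Pi.single i a : Zd d) = |(a : ℝ)| := by
  rw [eucNorm, Finset.sum_eq_single i (fun j _ hj => by simp [hj]) (by simp), Pi.single_eq_same,
    Real.sqrt_sq_eq_abs]

lemma exists_unit_step_toward {x y : Zd d} (hxy : x ≠ y) :
    ∃ e : Zd d, eucNorm e = 1 ∧
      ∑ i, ((y - x) i).natAbs = ∑ i, ((y - (x + e)) i).natAbs + 1 := by
  obtain ⟨i, hi⟩ := Function.ne_iff.mp hxy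
  refine ⟨Pi.single i (y i - x i).sign, ?_, ?_⟩
  · rw [eucNorm_single, ← Int.cast_abs, Int.abs_sign_of_ne_zero (by omega), Int.cast_one]
  · rw [← Finset.add_sum_erase _ _ (Finset.mem_univ i),
      ← Finset.add_sum_erase (a := i) _ _ (Finset.mem_univ i), add_right_comm]
    congr 1
    · simp only [Pi.sub_apply, Pi.add_apply, Pi.single_eq_same]
      rcases lt_or_gt_of_ne hi with h | h
      · rw [Int.sign_eq_one_of_pos (by omega)]; omega
      · rw [Int.sign_eq_neg_one_of_neg (by omega)]; omega
    · refine Finset.sum_congr rfl fun j hj => ?_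
      simp [Finset.ne_of_mem_erase hj]

/-- The closed ball of radius `r` around `x` for the maximum norm, encoded as an order interval
of `ℤ^d`. -/
def maxBall (x : Zd d) (r : ℕ) : Finset (Zd d) :=
  Finset.Icc (fun i => x i - r) (fun i => x i + r)

lemma mem_maxBall {x y : Zd d} {r : ℕ} : y ∈ maxBall x r ↔ maxNorm (y - x) ≤ r := by
  simp only [maxBall, Finset.mem_Icc, Pi.le_def, maxNorm_le_iff, Pi.sub_apply, ← forall_and]
  exact forall_congr' fun i => by omega

lemma card_maxBall (x : Zd d) (r : ℕ) : (maxBall x r).card = (2 * r + 1) ^ d := by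
  have hside : ∀ i, (x i + r + 1 - (x i - r)).toNat = 2 * r + 1 := fun i => by omega
  simp [maxBall, Pi.card_Icc, hside]

end Norms

section Composition

variable {d : ℕ} {P Q R : Zd d → Zd d → ℝ} {p q r : ℕ}

/-- The kernel `Q` has range at most `r` in the maximum norm, the norm in which Assumption A.1
measures distances. -/
def HasRange (Q : Zd d → Zd d → ℝ) (r : ℕ) : Prop :=
  ∀ x y, r < maxNorm (y - x) → Q x y = 0

lemma hasRange_ceil_of_eucNorm {B : ℝ} (h : ∀ x y, B < eucNorm (y - x) → Q x y = 0) :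
    HasRange Q ⌈B⌉₊ :=
  fun x y hxy => h x y <| (Nat.lt_of_ceil_lt hxy).trans_le (maxNorm_le_eucNorm _)

lemma HasRange.mono (hQ : HasRange Q q) (hqr : q ≤ r) : HasRange Q r :=
  fun x y hxy => hQ x y (hqr.trans_lt hxy)

lemma HasRange.eq_zero_of_notMem_maxBall (hQ : HasRange Q r) {x y : Zd d}
    (hy : y ∉ maxBall x r) : Q x y = 0 :=
  hQ x y <| not_le.mp <| mt mem_maxBall.mpr hy

lemma HasRange.eq_zero_of_source_notMem_maxBall (hQ : HasRange Q r) {x y : Zd d}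
    (hx : x ∉ maxBall y r) : Q x y = 0 :=
  hQ x y <| not_le.mp fun h => hx <| mem_maxBall.mpr <| maxNorm_sub_comm x y ▸ h

lemma HasRange.summable (hQ : HasRange Q r) (x : Zd d) : Summable (Q x) :=
  summable_of_ne_finset_zero (s := maxBall x r) fun _ => hQ.eq_zero_of_notMem_maxBall

lemma compK_nonneg (hP : ∀ x y, 0 ≤ P x y) (hQ : ∀ x y, 0 ≤ Q x y) (x y : Zd d) :
    0 ≤ compK P Q x y :=
  tsum_nonneg fun z => mul_nonneg (hP x z) (hQ z y)

lemma HasRange.compK_eq_sum_left (hP : HasRange P p) (x z : Zd d) :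
    compK P Q x z = ∑ y ∈ maxBall x p, P x y * Q y z :=
  tsum_eq_sum fun y hy => by rw [hP.eq_zero_of_notMem_maxBall hy, zero_mul]

lemma HasRange.compK_eq_sum_right (hQ : HasRange Q q) (x z : Zd d) :
    compK P Q x z = ∑ y ∈ maxBall z q, P x y * Q y z :=
  tsum_eq_sum fun y hy => by rw [hQ.eq_zero_of_source_notMem_maxBall hy, mul_zero]

protected lemma HasRange.compK (hP : HasRange P p) (hQ : HasRange Q q) :
    HasRange (compK P Q) (p + q) := by
  intro x z hxz
  rw [hP.compK_eq_sum_left]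
  refine Finset.sum_eq_zero fun y hy => ?_
  have hyz : q < maxNorm (z - y) := by
    have := maxNorm_sub_le x y z
    have := mem_maxBall.mp hy
    omega
  rw [hQ y z hyz, mul_zero]

lemma compK_assoc (hP : HasRange P p) (hR : HasRange R r) :
    compK (compK P Q) R = compK P (compK Q R) := by
  funext x z
  simp only [hP.compK_eq_sum_left, hR.compK_eq_sum_right, Finset.sum_mul, Finset.mul_sum]
  rw [Finset.sum_comm]
  simp only [mul_assoc]

lemma mul_le_compK (hP : ∀ x y, 0 ≤ P x y) (hQ : ∀ x y, 0 ≤ Q x y) (hr : HasRange Q r)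
    (x y z : Zd d) : P x y * Q y z ≤ compK P Q x z := by
  refine Summable.le_tsum (f := fun y => P x y * Q y z) ?_ y
    fun w _ => mul_nonneg (hP x w) (hQ w z)
  exact summable_of_ne_finset_zero (s := maxBall z r) fun w hw => by
    rw [hr.eq_zero_of_source_notMem_maxBall hw, mul_zero]

lemma HasRange.exists_mem_maxBall_le_of_le_compK (hP : HasRange P p) {a : ℝ} {x z : Zd d}
    (h : a ≤ compK P Q x z) :
    ∃ y ∈ maxBall x p, a / (2 * p + 1) ^ d ≤ P x y * Q y z := by
  refine Finset.exists_le_of_sum_le ⟨x, mem_maxBall.mpr (by simp)⟩ ?_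
  rw [← hP.compK_eq_sum_left, Finset.sum_const, card_maxBall, nsmul_eq_mul]
  push_cast
  rwa [mul_div_cancel₀ _ (by positivity)]

lemma mul_div_mul_le_compK_adjK {π : Zd d → ℝ} {c C a a' : ℝ} (hc : 0 < c)
    (hπ : ∀ x, c ≤ π x ∧ π x ≤ C) (hP : ∀ x y, 0 ≤ P x y) (hr : HasRange P p)
    (ha : 0 ≤ a) (ha' : 0 ≤ a') {x y z : Zd d} (hzx : a ≤ P z x) (hzy : a' ≤ P z y) :
    c * a / C * a' ≤ compK (adjK π P) P x y := by
  have hπ_pos : ∀ x, 0 < π x := fun x => hc.trans_le (hπ x).1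
  have hadj : ∀ x y, 0 ≤ adjK π P x y := fun x y =>
    div_nonneg (mul_nonneg (hπ_pos y).le (hP y x)) (hπ_pos x).le
  have hxz : c * a / C ≤ adjK π P x z :=
    div_le_div₀ (mul_nonneg (hπ_pos z).le (hP z x))
      (mul_le_mul (hπ z).1 hzx ha (hπ_pos z).le) (hπ_pos x) (hπ x).2
  exact (mul_le_mul hxz hzy ha' (hadj x z)).trans (mul_le_compK hadj hP hr x z y)

end Composition

section Powers

variable {d : ℕ} {Q : Zd d → Zd d → ℝ} {b : ℕ}

lemma kerpow_succ (Q : Zd d → Zd d → ℝ) (n : ℕ) : kerpow Q (n + 1) = compK (kerpow Q n) Q := rfl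

lemma kerpow_zero_self (Q : Zd d → Zd d → ℝ) (x : Zd d) : kerpow Q 0 x x = 1 := if_pos rfl

lemma kerpow_zero_of_ne (Q : Zd d → Zd d → ℝ) {x y : Zd d} (hxy : x ≠ y) : kerpow Q 0 x y = 0 :=
  if_neg hxy

lemma hasRange_kerpow_zero (Q : Zd d → Zd d → ℝ) : HasRange (kerpow Q 0) 0 :=
  fun x y hxy => kerpow_zero_of_ne Q <| by rintro rfl; simp at hxy

protected lemma HasRange.kerpow (hr : HasRange Q b) (n : ℕ) : HasRange (kerpow Q n) (n * b) := by
  induction n with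
  | zero => simpa using hasRange_kerpow_zero Q
  | succ n ih =>
    rw [Nat.succ_mul]
    exact ih.compK hr

lemma kerpow_nonneg (hQ : ∀ x y, 0 ≤ Q x y) (n : ℕ) : ∀ x y, 0 ≤ kerpow Q n x y := by
  induction n with
  | zero => intro x y; unfold kerpow; positivity
  | succ n ih => exact compK_nonneg ih hQ

lemma compK_kerpow_zero (P Q : Zd d → Zd d → ℝ) : compK P (kerpow Q 0) = P := by
  funext x y
  simp [compK, kerpow]

lemma kerpow_zero_compK (P Q : Zd d → Zd d → ℝ) : compK (kerpow Q 0) P = P := by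
  funext x y
  simp [compK, kerpow]

lemma kerpow_one (Q : Zd d → Zd d → ℝ) : kerpow Q 1 = Q := kerpow_zero_compK Q Q

lemma HasRange.kerpow_add (hr : HasRange Q b) (m n : ℕ) :
    kerpow Q (m + n) = compK (kerpow Q m) (kerpow Q n) := by
  induction n with
  | zero => exact (compK_kerpow_zero _ Q).symm
  | succ n ih => rw [← Nat.add_assoc, kerpow_succ, ih, compK_assoc (hr.kerpow m) hr, kerpow_succ]

lemma mul_le_kerpow_add (hQ : ∀ x y, 0 ≤ Q x y) (hr : HasRange Q b) {m n : ℕ} {a a' : ℝ}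
    (ha' : 0 ≤ a') {x y z : Zd d} (hxy : a ≤ kerpow Q m x y) (hyz : a' ≤ kerpow Q n y z) :
    a * a' ≤ kerpow Q (m + n) x z := by
  have hpow := kerpow_nonneg hQ
  rw [hr.kerpow_add]
  exact (mul_le_mul hxy hyz ha' (hpow m x y)).trans
    (mul_le_compK (hpow m) (hpow n) (hr.kerpow n) x y z)

lemma pow_le_kerpow_mul_self (hQ : ∀ x y, 0 ≤ Q x y) (hr : HasRange Q b) {l : ℕ} {a : ℝ}
    {x : Zd d} (ha : 0 ≤ a) (hloop : a ≤ kerpow Q l x x) (k : ℕ) :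
    a ^ k ≤ kerpow Q (l * k) x x := by
  induction k with
  | zero => simp [kerpow_zero_self]
  | succ k ih => exact pow_succ a k ▸ mul_le_kerpow_add hQ hr ha ih hloop

/-- A sub-Markov kernel: nonnegative with row sums at most `1`. For a row that is not summable
`∑'` is `0`; all kernels below have finite range, so their rows are summable. -/
structure IsSubMarkov (Q : Zd d → Zd d → ℝ) : Prop where
  nonneg : ∀ x y, 0 ≤ Q x y
  tsum_le_one : ∀ x, ∑' y, Q x y ≤ 1

variable (hQ : IsSubMarkov Q) (hr : HasRange Q b)
include hQ hr

lemma IsSubMarkov.kerpow_le_one (n : ℕ) (x y : Zd d) : kerpow Q n x y ≤ 1 := by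
  induction n generalizing x with
  | zero => unfold kerpow; split_ifs <;> norm_num
  | succ n ih =>
    rw [Nat.add_comm, hr.kerpow_add, kerpow_one, hr.compK_eq_sum_left]
    calc ∑ z ∈ maxBall x b, Q x z * kerpow Q n z y
        ≤ ∑ z ∈ maxBall x b, Q x z :=
          Finset.sum_le_sum fun z _ => mul_le_of_le_one_right (hQ.nonneg x z) (ih z)
      _ ≤ ∑' z, Q x z := (hr.summable x).sum_le_tsum _ fun z _ => hQ.nonneg x z
      _ ≤ 1 := hQ.tsum_le_one x

lemma IsSubMarkov.exists_intermediate {m n p : ℕ} (hm : HasRange (kerpow Q m) p) {a : ℝ}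
    {x z : Zd d} (h : a ≤ kerpow Q (m + n) x z) :
    ∃ y, maxNorm (y - x) ≤ p ∧ a / (2 * p + 1) ^ d ≤ kerpow Q m x y ∧
      a / (2 * p + 1) ^ d ≤ kerpow Q n y z := by
  rw [hr.kerpow_add] at h
  obtain ⟨y, hy, hay⟩ := hm.exists_mem_maxBall_le_of_le_compK h
  have hpow := kerpow_nonneg hQ.nonneg
  have hle := hQ.kerpow_le_one hr
  exact ⟨y, mem_maxBall.mp hy,
    hay.trans (mul_le_of_le_one_right (hpow m x y) (hle n y z)),
    hay.trans (mul_le_of_le_one_left (hpow n y z) (hle m x y))⟩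

end Powers

section Loops

variable {d : ℕ} {Q : Zd d → Zd d → ℝ} {b l : ℕ} {a : ℝ} {x : Zd d}
  (hQ : IsSubMarkov Q) (hr : HasRange Q b) (ha : 0 ≤ a) (hloop : a ≤ kerpow Q l x x)
include hQ hr ha hloop

lemma IsSubMarkov.pow_le_kerpow_mul_div_self (t : ℕ) :
    a ^ t ≤ kerpow Q (l * (t / l)) x x :=
  (pow_le_pow_of_le_one ha (hloop.trans (hQ.kerpow_le_one hr l x x)) (Nat.div_le_self t l)).trans
    (pow_le_kerpow_mul_self hQ.nonneg hr ha hloop (t / l))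

variable {L : ℕ} (hl : 0 < l) (hlL : l ≤ L)
include hl hlL

lemma IsSubMarkov.exists_near_le_kerpow_from (t : ℕ) :
    ∃ y, maxNorm (y - x) ≤ L * b ∧
      a ^ t * (a / (2 * (L * b : ℕ) + 1) ^ d) ≤ kerpow Q t x y := by
  have ht : t % l ≤ l := (Nat.mod_lt t hl).le
  rw [← Nat.add_sub_cancel' ht] at hloop
  obtain ⟨y, hyx, hxy, -⟩ := hQ.exists_intermediate hr
    ((hr.kerpow _).mono (Nat.mul_le_mul_right b (ht.trans hlL))) hloop
  rw [Nat.add_sub_cancel' ht] at hloop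
  have h := mul_le_kerpow_add hQ.nonneg hr (by positivity)
    (hQ.pow_le_kerpow_mul_div_self hr ha hloop t) hxy
  exact ⟨y, hyx, by rwa [Nat.div_add_mod] at h⟩

lemma IsSubMarkov.exists_near_le_kerpow_to (t : ℕ) :
    ∃ y, maxNorm (y - x) ≤ L * b ∧
      a ^ t * (a / (2 * (L * b : ℕ) + 1) ^ d) ≤ kerpow Q t y x := by
  have ht : t % l ≤ l := (Nat.mod_lt t hl).le
  rw [← Nat.sub_add_cancel ht] at hloop
  obtain ⟨y, hyx, -, hyx'⟩ := hQ.exists_intermediate hr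
    ((hr.kerpow _).mono (Nat.mul_le_mul_right b ((Nat.sub_le l _).trans hlL))) hloop
  rw [Nat.sub_add_cancel ht] at hloop
  have h := mul_le_kerpow_add hQ.nonneg hr (pow_nonneg ha t) hyx'
    (hQ.pow_le_kerpow_mul_div_self hr ha hloop t)
  exact ⟨y, hyx, by rwa [Nat.mod_add_div, mul_comm] at h⟩

end Loops

section StrongIrreducibility

variable {d N b : ℕ} {Q : Zd d → Zd d → ℝ} {ε : ℝ}

/-- Strong irreducibility with constants `(ε, N)`: each unit step is made within `N` steps of the
kernel with probability at least `ε`. -/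
def IsStronglyIrreducible (Q : Zd d → Zd d → ℝ) (ε : ℝ) (N : ℕ) : Prop :=
  ∀ x e : Zd d, eucNorm e = 1 → ∃ n ≤ N, ε ≤ kerpow Q n x (x + e)

lemma IsStronglyIrreducible.exists_loop (hirr : IsStronglyIrreducible Q ε N)
    (hQ : ∀ x y, 0 ≤ Q x y) (hr : HasRange Q b) (hε : 0 < ε) (hd : 0 < d) (x : Zd d) :
    ∃ l, 0 < l ∧ l ≤ 2 * N ∧ ε ^ 2 ≤ kerpow Q l x x := by
  have hunit (a : ℤ) (ha : |a| = 1) : eucNorm (Pi.single ⟨0, hd⟩ a : Zd d) = 1 := by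
    rw [eucNorm_single, ← Int.cast_abs, ha, Int.cast_one]
  set e : Zd d := Pi.single ⟨0, hd⟩ 1 with he
  obtain ⟨n, hnN, hn⟩ := hirr x e (hunit 1 rfl)
  obtain ⟨n', hnN', hn'⟩ := hirr (x + e) (-e) (by rw [he, ← Pi.single_neg]; exact hunit (-1) rfl)
  have hn_pos : 0 < n := by
    refine Nat.pos_of_ne_zero ?_
    rintro rfl
    rw [kerpow_zero_of_ne Q (by simp [he])] at hn
    exact hε.not_ge hn
  rw [add_neg_cancel_right] at hn'
  exact ⟨n + n', by omega, by omega, sq ε ▸ mul_le_kerpow_add hQ hr hε.le hn hn'⟩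

lemma IsStronglyIrreducible.exists_pow_le_kerpow (hirr : IsStronglyIrreducible Q ε N)
    (hQ : ∀ x y, 0 ≤ Q x y) (hr : HasRange Q b) (hε : 0 ≤ ε) (x y : Zd d) :
    ∃ n ≤ N * ∑ i, ((y - x) i).natAbs, ε ^ (∑ i, ((y - x) i).natAbs) ≤ kerpow Q n x y := by
  induction hk : ∑ i, ((y - x) i).natAbs generalizing x with
  | zero =>
    have hxy : x = y := by
      by_contra hne
      obtain ⟨_, -, h⟩ := exists_unit_step_toward hne
      omega
    exact ⟨0, Nat.zero_le _, by simp [hxy, kerpow_zero_self]⟩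
  | succ k ih =>
    obtain ⟨e, he, hdist⟩ := exists_unit_step_toward (x := x) (y := y) <| by
      rintro rfl
      simp at hk
    obtain ⟨n, hnN, hn⟩ := hirr x e he
    obtain ⟨n', hnN', hn'⟩ := ih (x + e) (by omega)
    refine ⟨n + n', by rw [Nat.mul_succ]; omega, ?_⟩
    rw [pow_succ']
    exact mul_le_kerpow_add hQ hr (pow_nonneg hε k) hn hn'

lemma IsStronglyIrreducible.exists_near_le_kerpow (hirr : IsStronglyIrreducible Q ε N)
    (hQ : IsSubMarkov Q) (hr : HasRange Q b) (hε : 0 < ε) (hd : 0 < d) {D m : ℕ} (hm : N * D ≤ m)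
    {x y : Zd d} (hD : ∑ i, ((y - x) i).natAbs ≤ D) :
    ∃ y', maxNorm (y' - y) ≤ 2 * N * b ∧
      ε ^ D * ((ε ^ 2) ^ m * (ε ^ 2 / (2 * (2 * N * b : ℕ) + 1) ^ d)) ≤ kerpow Q m x y' := by
  obtain ⟨l, hl, hlN, hloop⟩ := hirr.exists_loop hQ.nonneg hr hε hd y
  have hε_one : ε ≤ 1 :=
    (sq_le_one_iff₀ hε.le).mp (hloop.trans (hQ.kerpow_le_one hr l y y))
  obtain ⟨n, hnN, hn⟩ := hirr.exists_pow_le_kerpow hQ.nonneg hr hε.le x y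
  have hnm : n ≤ m := hnN.trans ((Nat.mul_le_mul_left N hD).trans hm)
  obtain ⟨y', hy', hyy'⟩ :=
    hQ.exists_near_le_kerpow_from hr (sq_nonneg ε) hloop hl hlN (m - n)
  refine ⟨y', hy', ?_⟩
  have hxy' := mul_le_kerpow_add hQ.nonneg hr (by positivity) hn hyy'
  rw [Nat.add_sub_cancel' hnm] at hxy'
  refine le_trans ?_ hxy'
  gcongr ?_ * (?_ * _)
  · exact pow_le_pow_of_le_one hε.le hε_one hD
  · exact pow_le_pow_of_le_one (sq_nonneg ε) (pow_le_one₀ hε.le hε_one) (Nat.sub_le m n)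

end StrongIrreducibility

theorem assumptionA1_for_power_general (d : ℕ) (hd : 0 < d) (c C ε B : ℝ) (N : ℕ)
    (hc : 0 < c) (hC : 0 < C) (hε : 0 < ε) :
    ∃ m : ℕ, 1 ≤ m ∧ ∃ (K : ℕ) (δ : ℝ), 0 < δ ∧
      ∀ (Q : Zd d → Zd d → ℝ) (π : Zd d → ℝ),
        IsSubMarkov Q →
        (∀ x, c ≤ π x ∧ π x ≤ C) →
        IsStronglyIrreducible Q ε N →
        (∀ x y : Zd d, B < eucNorm (y - x) → Q x y = 0) →
        AssumptionA1 (compK (adjK π (kerpow Q m)) (kerpow Q m)) K δ := by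
  set K : ℕ := 2 * N * ⌈B⌉₊
  set D : ℕ := d * (4 * K + 1)
  set m : ℕ := N * D + 1
  set κ : ℝ := (ε ^ 2) ^ m * (ε ^ 2 / (2 * K + 1) ^ d)
  refine ⟨m, Nat.le_add_left 1 _, K, c * κ / C * (ε ^ D * κ), by positivity, ?_⟩
  intro Q π hQ hπ hirr hrange x y hxy
  have hr := hasRange_ceil_of_eucNorm hrange
  obtain ⟨l, hl, hlN, hloop⟩ := hirr.exists_loop hQ.nonneg hr hε hd x
  obtain ⟨z, hz, hzx⟩ := hQ.exists_near_le_kerpow_to hr (sq_nonneg ε) hloop hl hlN m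
  have hzy : maxNorm (y - z) ≤ 4 * K + 1 := by
    have := maxNorm_sub_le z x y
    have := maxNorm_sub_comm z x
    omega
  obtain ⟨y', hy', hzy'⟩ := hirr.exists_near_le_kerpow hQ hr hε hd (Nat.le_succ (N * D))
    (sum_natAbs_le_of_maxNorm_le hzy)
  exact ⟨y', hy', mul_div_mul_le_compK_adjK hc hπ (kerpow_nonneg hQ.nonneg m) (hr.kerpow m)
    (by positivity) (by positivity) hzx hzy'⟩

theorem assumptionA1_for_power
    (d : ℕ) (hd : 0 < d) (c C ε B : ℝ) (N : ℕ)
    (hc : 0 < c) (hcC : c ≤ C) (hε : 0 < ε) (hB : 0 < B) :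
    ∃ m : ℕ, 1 ≤ m ∧
      ∀ (Q : Zd d → Zd d → ℝ) (π : Zd d → ℝ),
        (∀ x y, 0 ≤ Q x y) →
        (∀ x, HasSum (fun y => Q x y) 1) →
        (∀ x, 0 < π x) →
        (∀ y, HasSum (fun x => π x * Q x y) (π y)) →
        (∀ x, c ≤ π x ∧ π x ≤ C) →
        (∀ (x e : Zd d), eucNorm e = 1 → ∃ nn ≤ N, ε ≤ kerpow Q nn x (x + e)) →
        (∀ x y : Zd d, B < eucNorm (y - x) → Q x y = 0) →
        ∃ (K : ℕ) (δ : ℝ), 0 < δ ∧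
          AssumptionA1 (compK (adjK π (kerpow Q m)) (kerpow Q m)) K δ := by
  obtain ⟨m, hm, K, δ, hδ, hA1⟩ :=
    assumptionA1_for_power_general d hd c C ε B N hc (hc.trans_le hcC) hε
  exact ⟨m, hm, fun Q π hQ hsum _ _ hπ hirr hrange =>
    ⟨K, δ, hδ, hA1 Q π ⟨hQ, fun x => (hsum x).tsum_eq.le⟩ hπ hirr hrange⟩⟩

end
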